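/- (Markov basis of the classical QS model on a graph.) Let G be a finite undirected simple graph on vertex set {1,…,I}. Consider the ℚ-algebra homomorphism ψ from the polynomial ring ℚ[p_{ij}, p_{ji} : {i,j} ∈ E(G)] to the polynomial ring ℚ[x_e (e ∈ E(G)), c_1,…,c_I] sending p_{ij} ↦ x_{{i,j}}·c_i for each directed edge (i,j). Then the kernel of ψ (the toric ideal T_G of the classical quasisymmetry model on G) is generated by the binomials Π_{k=1}^n p_{v_k v_{k+1}} − Π_{k=1}^n p_{v_{k+1} v_k} (indices mod n), where v_1,…,v_n runs over all cycles of G (sequences of distinct vertices, n ≥ 3, with consecutive vertices adjacent in G, including {v_n,v_1} ∈ E(G)). -/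

import Mathlib

/-- Cyclic successor on `Fin n`. -/
def cycSucc {n : ℕ} (k : Fin n) : Fin n :=
  ⟨(k.val + 1) % n, Nat.mod_lt _ k.pos⟩

/-!
A monomial map sends `p^u` to the monomial whose exponent is a linear function `S u` of `u`, so its
kernel is spanned by the binomials `p^u - p^w` with `S u = S w`. Such a binomial is reduced to cycle
binomials by induction on the degree of `u`. A variable dividing both monomials is cancelled. If
there is none, equality of the edge exponents forces `w` to be `u` with all edges reversed, and
equality of the vertex exponents then says that the multidigraph `u` is balanced: a vertex that is
entered is also left. Walking along the edges of `u` therefore closes up into a directed cycle, of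
length at least 3 because `u` contains no edge together with its reverse. This cycle divides `p^u`,
its reverse divides `p^w`, and both are removed at the cost of one cycle binomial.
-/

namespace QuasiSymmetry

open MvPolynomial Function Finsupp

section MonomialMaps

variable {R σ τ : Type*}

theorem aeval_monomial_monomial [CommSemiring R] (a : σ → τ →₀ ℕ) (u : σ →₀ ℕ) (r : R) :
    aeval (fun s => monomial (a s) (1 : R)) (monomial u r) =
      monomial (linearCombination ℕ a u) r := by
  simp only [aeval_monomial, monomial_pow, one_pow, algebraMap_eq, linearCombination_apply]
  exact (monomial_finsupp_sum_index u (fun s n => n • a s) r).symm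

variable [CommRing R]

theorem ker_aeval_monomial (a : σ → τ →₀ ℕ) :
    RingHom.ker (aeval (R := R) fun s => monomial (a s) (1 : R)) =
      Ideal.span {P | ∃ u w : σ →₀ ℕ, linearCombination ℕ a u = linearCombination ℕ a w ∧
        P = monomial u 1 - monomial w 1} := by
  set S := linearCombination ℕ a
  set J := Ideal.span {P : MvPolynomial σ R | ∃ u w, S u = S w ∧ P = monomial u 1 - monomial w 1}
  apply le_antisymm
  · -- Modulo `J` a monomial depends only on its image, so the quotient map factors through `aeval`.
    let lift : MvPolynomial τ R →ₗ[R] MvPolynomial σ R ⧸ J :=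
      (basisMonomials τ R).constr R fun d => Ideal.Quotient.mk J (monomial (invFun S d) 1)
    have lift_monomial (u : σ →₀ ℕ) :
        lift (monomial (S u) 1) = Ideal.Quotient.mk J (monomial u 1) := by
      have hlift : lift (monomial (S u) 1) = Ideal.Quotient.mk J (monomial (invFun S (S u)) 1) :=
        (basisMonomials τ R).constr_basis R _ (S u)
      rw [hlift, Ideal.Quotient.mk_eq_mk_iff_sub_mem]
      exact Ideal.subset_span ⟨_, _, invFun_eq ⟨u, rfl⟩, rfl⟩
    have lift_comp : lift ∘ₗ (aeval fun s => monomial (a s) (1 : R)).toLinearMap =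
        (Ideal.Quotient.mkₐ R J).toLinearMap := by
      refine (basisMonomials σ R).ext fun u => ?_
      simpa only [LinearMap.comp_apply, AlgHom.toLinearMap_apply, coe_basisMonomials,
        aeval_monomial_monomial, Ideal.Quotient.mkₐ_eq_mk] using lift_monomial u
    intro P hP
    have hmk : Ideal.Quotient.mk J P = lift (aeval (fun s => monomial (a s) (1 : R)) P) :=
      (LinearMap.congr_fun lift_comp P).symm
    rwa [RingHom.mem_ker.mp hP, map_zero, Ideal.Quotient.eq_zero_iff_mem] at hmk
  · rw [Ideal.span_le]
    rintro _ ⟨u, w, huw, rfl⟩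
    change aeval _ _ = 0
    rw [map_sub, aeval_monomial_monomial, aeval_monomial_monomial, huw, sub_self]

theorem monomial_add_sub_monomial_add_mem {J : Ideal (MvPolynomial σ R)} {c d u w : σ →₀ ℕ}
    (hcd : monomial c 1 - monomial d 1 ∈ J) (huw : monomial u 1 - monomial w 1 ∈ J) :
    monomial (c + u) 1 - monomial (d + w) 1 ∈ J := by
  have hmul (a b : σ →₀ ℕ) : monomial (a + b) (1 : R) = monomial a 1 * monomial b 1 := by
    rw [monomial_mul, one_mul]
  rw [hmul, hmul]
  exact J.mul_sub_mul_mem hcd huw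

theorem monomial_sub_monomial_mem_of_exists_le {M : Type*} [AddZeroClass M] [IsLeftCancelAdd M]
    (S : (σ →₀ ℕ) →+ M) (J : Ideal (MvPolynomial σ R))
    (exists_le : ∀ u w, S u = S w → u ≠ w → ∃ c ≤ u, ∃ d ≤ w, c ≠ 0 ∧ S c = S d ∧
      monomial c 1 - monomial d 1 ∈ J)
    {u w : σ →₀ ℕ} (huw : S u = S w) : monomial u 1 - monomial w 1 ∈ J := by
  induction hN : u.degree using Nat.strong_induction_on generalizing u w with
  | _ N ih =>
  rcases eq_or_ne u w with rfl | hne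
  · simp
  obtain ⟨c, hcu, d, hdw, hc, hcd, hmem⟩ := exists_le u w huw hne
  obtain ⟨u', rfl⟩ := exists_add_of_le hcu
  obtain ⟨w', rfl⟩ := exists_add_of_le hdw
  have huw' : S u' = S w' := by
    rw [map_add, map_add, hcd] at huw
    exact add_left_cancel huw
  have hdeg : u'.degree < N := by
    have : c.degree ≠ 0 := mt (degree_eq_zero_iff c).mp hc
    rw [map_add] at hN
    lia
  exact monomial_add_sub_monomial_add_mem hmem (ih _ hdeg huw' rfl)

end MonomialMaps

section Exponents

variable {σ τ : Type*}

theorem linearCombination_apply_ne_zero_iff (a : σ → τ →₀ ℕ) (u : σ →₀ ℕ) (t : τ) :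
    linearCombination ℕ a u t ≠ 0 ↔ ∃ s, u s ≠ 0 ∧ a s t ≠ 0 := by
  simp [linearCombination_apply, Finsupp.sum, Finsupp.finsetSum_apply]

theorem sum_single_one_le {ι : Type*} [Fintype ι] {f : ι → σ} (hf : Injective f) {u : σ →₀ ℕ}
    (hu : ∀ k, u (f k) ≠ 0) : ∑ k, single (f k) 1 ≤ u := by
  classical
  intro s
  rw [Finsupp.finsetSum_apply]
  by_cases hs : ∃ k, f k = s
  · obtain ⟨k, rfl⟩ := hs
    simpa [single_apply, hf.eq_iff] using Nat.one_le_iff_ne_zero.mpr (hu k)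
  · simp_all

end Exponents

section Cycles

theorem cycSucc_bijective {n : ℕ} : Bijective (cycSucc (n := n)) := by
  refine Finite.injective_iff_bijective.mp fun i j hij => Fin.ext ?_
  have hmod : i.val + 1 ≡ j.val + 1 [MOD n] := congrArg Fin.val hij
  exact (hmod.add_right_cancel' 1).eq_of_lt_of_lt i.isLt j.isLt

variable {α : Type*}

theorem periodicPts_nonempty [Finite α] [Nonempty α] (f : α → α) : (periodicPts f).Nonempty := by
  obtain ⟨x⟩ := ‹Nonempty α›
  obtain ⟨a, b, hab, heq⟩ :=
    Set.finite_univ.exists_lt_map_eq_of_forall_mem (fun k : ℕ => Set.mem_univ (f^[k] x))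
  refine ⟨f^[a] x, mk_mem_periodicPts (Nat.sub_pos_of_lt hab) ?_⟩
  rw [IsPeriodicPt, IsFixedPt, ← iterate_add_apply, Nat.sub_add_cancel hab.le, heq]

theorem three_le_minimalPeriod {f : α → α} {x : α} (hx : x ∈ periodicPts f) (h₁ : f x ≠ x)
    (h₂ : f (f x) ≠ x) : 3 ≤ minimalPeriod f x := by
  have hpos := minimalPeriod_pos_of_mem_periodicPts hx
  have hne_one : minimalPeriod f x ≠ 1 := mt minimalPeriod_eq_one_iff_isFixedPt.mp h₁
  have hne_two : minimalPeriod f x ≠ 2 := fun h => h₂ <| by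
    simpa [h] using iterate_minimalPeriod (f := f) (x := x)
  lia

theorem exists_cycle_of_forall_exists_rel {r : α → α → Prop} (asymm : ∀ x y, r x y → ¬ r y x)
    {s : Set α} (finite : s.Finite) (nonempty : s.Nonempty)
    (exists_rel : ∀ x ∈ s, ∃ y ∈ s, r x y) :
    ∃ n, 3 ≤ n ∧ ∃ v : Fin n → α, Injective v ∧ ∀ k, r (v k) (v (cycSucc k)) := by
  have : Finite s := finite
  have : Nonempty s := nonempty.to_subtype
  have exists_next (x : s) : ∃ y : s, r x y := by
    obtain ⟨y, hy, hxy⟩ := exists_rel x x.2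
    exact ⟨⟨y, hy⟩, hxy⟩
  choose next hnext using exists_next
  obtain ⟨x, hx⟩ := periodicPts_nonempty next
  have h₁ : next x ≠ x := fun h => by
    have hxx := hnext x
    rw [h] at hxx
    exact asymm _ _ hxx hxx
  have h₂ : next (next x) ≠ x := fun h => by
    have hback := hnext (next x)
    rw [h] at hback
    exact asymm _ _ (hnext x) hback
  refine ⟨minimalPeriod next x, three_le_minimalPeriod hx h₁ h₂, fun k => next^[k] x, ?_, ?_⟩
  · exact Subtype.val_injective.comp fun i j hij =>
      Fin.ext (iterate_injOn_Iio_minimalPeriod i.isLt j.isLt hij)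
  · intro k
    simpa only [cycSucc, iterate_mod_minimalPeriod_eq, iterate_succ_apply'] using hnext (next^[k] x)

end Cycles

variable {V : Type*} {G : SimpleGraph V}

/-- The directed edges of `G`, indexing the variables `p_{ij}`. This is `SimpleGraph.Dart` spelled
as a subtype of pairs. -/
abbrev DirectedEdge (G : SimpleGraph V) : Type _ := {e : V × V // G.Adj e.1 e.2}

/-- The directed edge traversed backwards. -/
def DirectedEdge.rev (e : DirectedEdge G) : DirectedEdge G := ⟨(e.1.2, e.1.1), e.2.symm⟩

theorem DirectedEdge.edge_eq_iff {e f : DirectedEdge G} :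
    s(f.1.1, f.1.2) = s(e.1.1, e.1.2) ↔ f = e ∨ f = e.rev := by
  simp [Subtype.ext_iff, Prod.ext_iff, rev]

theorem DirectedEdge.rev_ne (e : DirectedEdge G) : e.rev ≠ e :=
  fun h => e.2.ne (congrArg (fun f : DirectedEdge G => f.1.2) h)

/-- The exponent of `x_{{i,j}} c_i`, the image of `p_{ij}` under the quasisymmetry
parametrization. -/
noncomputable def qsExponent (e : DirectedEdge G) : Sym2 V ⊕ V →₀ ℕ :=
  single (Sum.inl s(e.1.1, e.1.2)) 1 + single (Sum.inr e.1.1) 1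

/-- The sufficient statistic of the quasisymmetry model, which is the action of the parametrization
on exponents: it sends a table `u` of directed edge counts to its symmetrized edge counts and its
vertex out-degrees. -/
noncomputable def qsStatistic : (DirectedEdge G →₀ ℕ) →ₗ[ℕ] (Sym2 V ⊕ V →₀ ℕ) :=
  linearCombination ℕ qsExponent

theorem qsStatistic_single_one (e : DirectedEdge G) : qsStatistic (single e 1) = qsExponent e := by
  simp [qsStatistic]

theorem qsStatistic_edge (u : DirectedEdge G →₀ ℕ) (e : DirectedEdge G) :
    qsStatistic u (Sum.inl s(e.1.1, e.1.2)) = u e + u e.rev := by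
  classical
  induction u using Finsupp.induction_linear with
  | zero => simp
  | add u w hu hw => simp only [map_add, Finsupp.add_apply, hu, hw]; ring
  | single f n =>
    have hne := e.rev_ne
    simp only [qsStatistic, qsExponent, linearCombination_single, Finsupp.smul_apply,
      Finsupp.add_apply, single_apply, Sum.inl.injEq, reduceCtorEq, DirectedEdge.edge_eq_iff]
    grind

theorem qsStatistic_vertex_ne_zero_iff {u : DirectedEdge G →₀ ℕ} {i : V} :
    qsStatistic u (Sum.inr i) ≠ 0 ↔ ∃ e : DirectedEdge G, u e ≠ 0 ∧ e.1.1 = i := by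
  classical
  simp [qsStatistic, linearCombination_apply_ne_zero_iff, qsExponent, single_apply]

section DisjointSupports

variable {u w : DirectedEdge G →₀ ℕ}

theorem apply_rev_eq_of_qsStatistic_eq (hS : qsStatistic u = qsStatistic w)
    (hdisj : Disjoint u.support w.support) (e : DirectedEdge G) : w e.rev = u e := by
  have hedge : u e + u e.rev = w e + w e.rev := by
    rw [← qsStatistic_edge, ← qsStatistic_edge, hS]
  have hzero (f : DirectedEdge G) (hf : u f ≠ 0) : w f = 0 :=
    notMem_support_iff.mp (Finset.disjoint_left.mp hdisj (mem_support_iff.mpr hf))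
  have := hzero e
  have := hzero e.rev
  lia

theorem apply_rev_eq_zero_of_qsStatistic_eq (hS : qsStatistic u = qsStatistic w)
    (hdisj : Disjoint u.support w.support) {e : DirectedEdge G} (he : u e ≠ 0) : u e.rev = 0 := by
  have hw : w e.rev ≠ 0 := by rwa [apply_rev_eq_of_qsStatistic_eq hS hdisj]
  exact notMem_support_iff.mp (Finset.disjoint_right.mp hdisj (mem_support_iff.mpr hw))

theorem exists_edge_from_head (hS : qsStatistic u = qsStatistic w)
    (hdisj : Disjoint u.support w.support) {e : DirectedEdge G} (he : u e ≠ 0) :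
    ∃ f : DirectedEdge G, u f ≠ 0 ∧ f.1.1 = e.1.2 := by
  rw [← qsStatistic_vertex_ne_zero_iff, hS, qsStatistic_vertex_ne_zero_iff]
  exact ⟨e.rev, by rwa [apply_rev_eq_of_qsStatistic_eq hS hdisj], rfl⟩

end DisjointSupports

/-- The `k`-th directed edge `(v_k, v_{k+1})` of the closed walk `v`. -/
def cycleEdge {n : ℕ} {v : Fin n → V} (hv : ∀ k, G.Adj (v k) (v (cycSucc k))) (k : Fin n) :
    DirectedEdge G :=
  ⟨(v k, v (cycSucc k)), hv k⟩

theorem exists_cycle_of_qsStatistic_eq {u w : DirectedEdge G →₀ ℕ}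
    (hS : qsStatistic u = qsStatistic w) (hdisj : Disjoint u.support w.support) (hu : u ≠ 0) :
    ∃ n, 3 ≤ n ∧ ∃ (v : Fin n → V) (hv : ∀ k, G.Adj (v k) (v (cycSucc k))), Injective v ∧
      ∀ k, u (cycleEdge hv k) ≠ 0 := by
  obtain ⟨e₀, he₀⟩ := DFunLike.ne_iff.mp hu
  obtain ⟨n, hn, v, hinj, hedge⟩ := exists_cycle_of_forall_exists_rel
    (r := fun i j => ∃ h : G.Adj i j, u ⟨(i, j), h⟩ ≠ 0)
    (s := (fun e : DirectedEdge G => e.1.1) '' u.support)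
    (fun _ _ ⟨_, hij⟩ ⟨_, hji⟩ => hji (apply_rev_eq_zero_of_qsStatistic_eq hS hdisj hij))
    (u.support.finite_toSet.image _)
    ⟨e₀.1.1, e₀, mem_support_iff.mpr he₀, rfl⟩
    (by
      rintro _ ⟨e, he, rfl⟩
      have he := mem_support_iff.mp he
      obtain ⟨f, hf, hfe⟩ := exists_edge_from_head hS hdisj he
      exact ⟨e.1.2, ⟨f, mem_support_iff.mpr hf, hfe⟩, e.2, he⟩)
  choose hv hpos using hedge
  exact ⟨n, hn, v, hv, hinj, hpos⟩

section CycleEdges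

variable {n : ℕ} {v : Fin n → V}

theorem qsStatistic_sum_cycleEdge (hv : ∀ k, G.Adj (v k) (v (cycSucc k))) :
    qsStatistic (∑ k, single (cycleEdge hv k) 1) =
      qsStatistic (∑ k, single (cycleEdge hv k).rev 1) := by
  simp only [map_sum, qsStatistic_single_one, qsExponent, Finset.sum_add_distrib, cycleEdge,
    DirectedEdge.rev, Sym2.eq_swap]
  congr 1
  exact (cycSucc_bijective.sum_comp fun k => single (Sum.inr (v k)) 1).symm

theorem cycleEdge_injective (hv : ∀ k, G.Adj (v k) (v (cycSucc k))) (hinj : Injective v) :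
    Injective (cycleEdge hv) :=
  fun _ _ h => hinj (congrArg (fun e : DirectedEdge G => e.1.1) h)

theorem cycleEdge_rev_injective (hv : ∀ k, G.Adj (v k) (v (cycSucc k))) (hinj : Injective v) :
    Injective fun k => (cycleEdge hv k).rev :=
  fun _ _ h => hinj (congrArg (fun e : DirectedEdge G => e.1.2) h)

end CycleEdges

/-- The binomials `∏ p_{v_k v_{k+1}} - ∏ p_{v_{k+1} v_k}` of the cycles of `G`, a cycle being an
injective closed walk of length at least 3. -/
def cycleBinomials (R : Type*) [CommRing R] (G : SimpleGraph V) :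
    Set (MvPolynomial (DirectedEdge G) R) :=
  {P | ∃ n, 3 ≤ n ∧ ∃ (v : Fin n → V) (hv : ∀ k, G.Adj (v k) (v (cycSucc k))), Injective v ∧
    P = monomial (∑ k, single (cycleEdge hv k) 1) 1 -
      monomial (∑ k, single (cycleEdge hv k).rev 1) 1}

variable {R : Type*} [CommRing R]

theorem exists_le_monomial_sub_monomial_mem_span_cycleBinomials {u w : DirectedEdge G →₀ ℕ}
    (hS : qsStatistic u = qsStatistic w) (hne : u ≠ w) :
    ∃ c ≤ u, ∃ d ≤ w, c ≠ 0 ∧ qsStatistic c = qsStatistic d ∧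
      monomial c 1 - monomial d 1 ∈ Ideal.span (cycleBinomials R G) := by
  by_cases hdisj : Disjoint u.support w.support
  · have hrev := apply_rev_eq_of_qsStatistic_eq hS hdisj
    have hu : u ≠ 0 := by
      rintro rfl
      exact hne (Finsupp.ext fun e => hrev e.rev).symm
    obtain ⟨n, hn, v, hv, hinj, hpos⟩ := exists_cycle_of_qsStatistic_eq hS hdisj hu
    refine ⟨_, sum_single_one_le (cycleEdge_injective hv hinj) hpos,
      _, sum_single_one_le (cycleEdge_rev_injective hv hinj) fun k => ?_,
      fun hzero => ?_, qsStatistic_sum_cycleEdge hv,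
      Ideal.subset_span ⟨n, hn, v, hv, hinj, rfl⟩⟩
    · rw [hrev]
      exact hpos k
    · have : n = 0 := by simpa using congrArg degree hzero
      lia
  · obtain ⟨e, heu, hew⟩ := Finset.not_disjoint_iff.mp hdisj
    have single_le {t : DirectedEdge G →₀ ℕ} (he : e ∈ t.support) : single e 1 ≤ t :=
      Finsupp.single_le_iff.mpr (Nat.one_le_iff_ne_zero.mpr (mem_support_iff.mp he))
    exact ⟨_, single_le heu, _, single_le hew, by simp, rfl, by simp⟩

theorem mem_cycleBinomials_iff_prod_dite [DecidableRel G.Adj]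
    {P : MvPolynomial (DirectedEdge G) R} :
    P ∈ cycleBinomials R G ↔
      ∃ (n : ℕ) (_ : 3 ≤ n) (v : Fin n → V),
        Injective v ∧ (∀ k, G.Adj (v k) (v (cycSucc k))) ∧
        P = (∏ k, if h : G.Adj (v k) (v (cycSucc k)) then X ⟨(v k, v (cycSucc k)), h⟩ else 0) -
          ∏ k, if h : G.Adj (v (cycSucc k)) (v k) then X ⟨(v (cycSucc k), v k), h⟩ else 0 := by
  have prod_dite {n : ℕ} {v : Fin n → V} (hv : ∀ k, G.Adj (v k) (v (cycSucc k))) :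
      (∏ k, if h : G.Adj (v k) (v (cycSucc k)) then
        (X ⟨(v k, v (cycSucc k)), h⟩ : MvPolynomial (DirectedEdge G) R) else 0) =
        monomial (∑ k, single (cycleEdge hv k) 1) 1 := by
    simp [hv, monomial_sum_one, X, cycleEdge]
  have prod_dite_rev {n : ℕ} {v : Fin n → V} (hv : ∀ k, G.Adj (v k) (v (cycSucc k))) :
      (∏ k, if h : G.Adj (v (cycSucc k)) (v k) then
        (X ⟨(v (cycSucc k), v k), h⟩ : MvPolynomial (DirectedEdge G) R) else 0) =
        monomial (∑ k, single (cycleEdge hv k).rev 1) 1 := by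
    simp [(hv _).symm, monomial_sum_one, X, cycleEdge, DirectedEdge.rev]
  constructor
  · rintro ⟨n, hn, v, hv, hinj, rfl⟩
    exact ⟨n, hn, v, hinj, hv, by rw [prod_dite hv, prod_dite_rev hv]⟩
  · rintro ⟨n, hn, v, hinj, hv, rfl⟩
    exact ⟨n, hn, v, hv, hinj, by rw [prod_dite hv, prod_dite_rev hv]⟩

end QuasiSymmetry

open MvPolynomial QuasiSymmetry in
theorem classical_qs_toric_ideal_generated_by_cycle_binomials_general {V : Type*} (R : Type*)
    [CommRing R] (G : SimpleGraph V) :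
    RingHom.ker (aeval (R := R) fun e : DirectedEdge G =>
      (X (Sum.inl s(e.1.1, e.1.2)) * X (Sum.inr e.1.1) : MvPolynomial (Sym2 V ⊕ V) R)) =
    Ideal.span (cycleBinomials R G) := by
  have X_mul_X (e : DirectedEdge G) :
      (X (Sum.inl s(e.1.1, e.1.2)) * X (Sum.inr e.1.1) : MvPolynomial (Sym2 V ⊕ V) R) =
        monomial (qsExponent e) 1 := by
    rw [X, X, monomial_mul, one_mul, qsExponent]
  simp only [X_mul_X, ker_aeval_monomial]
  apply le_antisymm <;> rw [Ideal.span_le]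
  · rintro _ ⟨u, w, huw, rfl⟩
    exact monomial_sub_monomial_mem_of_exists_le qsStatistic.toAddMonoidHom _
      (fun _ _ => exists_le_monomial_sub_monomial_mem_span_cycleBinomials) huw
  · rintro _ ⟨n, -, v, hv, -, rfl⟩
    exact Ideal.subset_span ⟨_, _, qsStatistic_sum_cycleEdge hv, rfl⟩

open MvPolynomial in
/-- Markov basis of the classical QS model on a graph: the
kernel of the ring map `p_{ij} ↦ x_{{i,j}}·c_i` (from the polynomial ring in
the doubled edge variables of a graph `G` to the polynomial ring in the edge
variables `x` and vertex variables `c`) is generated by the cycle binomials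
`Π_k p_{v_k v_{k+1}} − Π_k p_{v_{k+1} v_k}`, where `v_1,…,v_n` runs over all
cycles of `G`. -/
theorem classical_qs_toric_ideal_generated_by_cycle_binomials (I : ℕ)
    (G : SimpleGraph (Fin I)) [DecidableRel G.Adj] :
    RingHom.ker
      ((aeval (R := ℚ)
          (fun e : {e : Fin I × Fin I // G.Adj e.1 e.2} =>
            (X (Sum.inl s(e.1.1, e.1.2)) * X (Sum.inr e.1.1) :
              MvPolynomial (Sym2 (Fin I) ⊕ Fin I) ℚ))).toRingHom)
    = Ideal.span
        { P : MvPolynomial {e : Fin I × Fin I // G.Adj e.1 e.2} ℚ |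
          ∃ (n : ℕ) (_ : 3 ≤ n) (v : Fin n → Fin I),
            Function.Injective v ∧ (∀ k, G.Adj (v k) (v (cycSucc k))) ∧
            P = (∏ k : Fin n,
                  (fun i j => if h : G.Adj i j then (X ⟨(i, j), h⟩ :
                      MvPolynomial {e : Fin I × Fin I // G.Adj e.1 e.2} ℚ)
                    else 0) (v k) (v (cycSucc k)))
              - ∏ k : Fin n,
                  (fun i j => if h : G.Adj i j then (X ⟨(i, j), h⟩ :
                      MvPolynomial {e : Fin I × Fin I // G.Adj e.1 e.2} ℚ)
                    else 0) (v (cycSucc k)) (v k) } := by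
  refine (classical_qs_toric_ideal_generated_by_cycle_binomials_general ℚ G).trans ?_
  exact congrArg Ideal.span (Set.ext fun _ => QuasiSymmetry.mem_cycleBinomials_iff_prod_dite)
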